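/- Suppose A, Θ ⊆ ℝ; u_R exhibits strictly increasing differences; every μ ∈ ΔΘ admits some a ∈ { min A*_R(μ), max A*_R(μ) } such that ∫ u_S(a,θ) dμ(θ) = v(μ); and for each θ̄ ∈ { min supp μ0, max supp μ0 }, either μ0({θ̄}) = 0 or A*_R(δ_{θ̄}) is a singleton (δ_{θ̄} the point mass at θ̄). Then ŵ(μ0) = v̂(μ0), i.e., the sender has a unique equilibrium payoff. -/

import Mathlib

open MeasureTheory

/-- The Borel σ-algebra on the space of probability measures (the σ-algebra generated by
evaluation maps, i.e. the subspace σ-algebra of the Giry σ-algebra; for metrizable spaces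
this is the Borel σ-algebra of the weak* topology). -/
instance probMeasurableSpace {Ω : Type*} [MeasurableSpace Ω] :
    MeasurableSpace (ProbabilityMeasure Ω) :=
  MeasurableSpace.comap (fun μ => (μ : Measure Ω)) inferInstance

/-- Sender's expected utility from action `a` at belief `μ`. -/
noncomputable def senderEU {A Θ : Type*} [MeasurableSpace Θ]
    (uS : A → Θ → ℝ) (μ : ProbabilityMeasure Θ) (a : A) : ℝ :=
  ∫ θ, uS a θ ∂(μ : Measure Θ)

/-- The receiver's best responses `A*_R(μ)` at belief `μ`. -/
def bestResponses {A Θ : Type*} [MeasurableSpace Θ]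
    (uR : A → Θ → ℝ) (μ : ProbabilityMeasure Θ) : Set A :=
  {a | ∀ a' : A, ∫ θ, uR a' θ ∂(μ : Measure Θ) ≤ ∫ θ, uR a θ ∂(μ : Measure Θ)}

/-- The sender's upper value function `v`. -/
noncomputable def vFun {A Θ : Type*} [MeasurableSpace Θ]
    (uS uR : A → Θ → ℝ) (μ : ProbabilityMeasure Θ) : ℝ :=
  sSup (senderEU uS μ '' bestResponses uR μ)

/-- The sender's lower value function `w`. -/
noncomputable def wFun {A Θ : Type*} [MeasurableSpace Θ]
    (uS uR : A → Θ → ℝ) (μ : ProbabilityMeasure Θ) : ℝ :=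
  sInf (senderEU uS μ '' bestResponses uR μ)

/-- The set `I(μ0)` of information policies: distributions over posteriors with
barycenter equal to the prior `μ0`. -/
def infoPolicies {Θ : Type*} [MeasurableSpace Θ] (μ0 : ProbabilityMeasure Θ) :
    Set (ProbabilityMeasure (ProbabilityMeasure Θ)) :=
  {p | ∀ B : Set Θ, MeasurableSet B →
    ∫ ν, ((ν : Measure Θ) B).toReal ∂(p : Measure (ProbabilityMeasure Θ))
      = ((μ0 : Measure Θ) B).toReal}

/-- `v̂(μ0)`: the sender's best equilibrium (Bayesian persuasion) value. -/
noncomputable def vHat {A Θ : Type*} [MeasurableSpace Θ]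
    (uS uR : A → Θ → ℝ) (μ0 : ProbabilityMeasure Θ) : ℝ :=
  sSup ((fun p : ProbabilityMeasure (ProbabilityMeasure Θ) =>
    ∫ ν, vFun uS uR ν ∂(p : Measure (ProbabilityMeasure Θ))) '' infoPolicies μ0)

/-- `ŵ(μ0)`: the sender's worst equilibrium value. -/
noncomputable def wHat {A Θ : Type*} [MeasurableSpace Θ]
    (uS uR : A → Θ → ℝ) (μ0 : ProbabilityMeasure Θ) : ℝ :=
  sSup ((fun p : ProbabilityMeasure (ProbabilityMeasure Θ) =>
    ∫ ν, wFun uS uR ν ∂(p : Measure (ProbabilityMeasure Θ))) '' infoPolicies μ0)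

/-- The (topological) support of a probability measure. -/
def msupport {Θ : Type*} [MeasurableSpace Θ] [TopologicalSpace Θ]
    (μ : ProbabilityMeasure Θ) : Set Θ :=
  {θ | ∀ U : Set Θ, IsOpen U → θ ∈ U → (μ : Measure Θ) U ≠ 0}

/-- The point mass at `x` as a probability measure. -/
noncomputable def diracPM {X : Type*} [MeasurableSpace X] (x : X) : ProbabilityMeasure X :=
  ⟨MeasureTheory.Measure.dirac x, MeasureTheory.Measure.dirac.isProbabilityMeasure⟩

open Filter Set Topology

/-! Fix an information policy `p` for the prior `μ`. For independent `θ ∼ x` and `θ' ∼ μ`, the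
laws of `max θ θ'` and `min θ θ'` add up to `x + μ`. Hence moving most of the mass at each posterior
`x` slightly towards either of these laws keeps the barycenter at `μ`, once the small remaining
share moves a long way towards the other one.

By strictly increasing differences, every best response after the upward move lies weakly above
`max A*_R(x)`, and dually every best response after the downward move lies weakly below
`min A*_R(x)`. As the perturbation vanishes, best responses therefore converge to whichever of
the two extreme ones attains `v(x)`, so that the lower value `w` of the perturbed posterior
recovers `v(x)` in the limit.

The upward move raises `x` only if `θ < θ'` has positive probability. Among beliefs carried by the
support of `μ`, this fails only for the point mass at its top, where the boundary hypothesis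
applies: either `p` puts no weight on that belief or its best response is unique. The downward
move is dual.
-/

section Mixture

variable {Ω : Type*} [MeasurableSpace Ω]

/-- The mixture `(1 - t) μ + t ν` of two probability measures. -/
noncomputable def mixture (t : unitInterval) (μ ν : ProbabilityMeasure Ω) :
    ProbabilityMeasure Ω :=
  ⟨unitInterval.toNNReal (unitInterval.symm t) • (μ : Measure Ω)
    + unitInterval.toNNReal t • (ν : Measure Ω), ⟨by
      simp only [Measure.add_apply, Measure.smul_apply, measure_univ, ENNReal.smul_def,
        smul_eq_mul, mul_one]
      exact_mod_cast unitInterval.toNNReal_symm_add_toNNReal t⟩⟩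

theorem integral_mixture (t : unitInterval) {μ ν : ProbabilityMeasure Ω} {f : Ω → ℝ}
    (hμ : Integrable f (μ : Measure Ω)) (hν : Integrable f (ν : Measure Ω)) :
    ∫ ω, f ω ∂(mixture t μ ν : Measure Ω)
      = (1 - t) * ∫ ω, f ω ∂(μ : Measure Ω) + t * ∫ ω, f ω ∂(ν : Measure Ω) := by
  rw [mixture, ProbabilityMeasure.coe_mk,
    integral_add_measure hμ.smul_measure_nnreal hν.smul_measure_nnreal,
    integral_smul_nnreal_measure, integral_smul_nnreal_measure]
  simp [NNReal.smul_def]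

theorem toReal_mixture_apply (t : unitInterval) (μ ν : ProbabilityMeasure Ω) (B : Set Ω) :
    ((mixture t μ ν : Measure Ω) B).toReal
      = (1 - t) * ((μ : Measure Ω) B).toReal + t * ((ν : Measure Ω) B).toReal := by
  rw [mixture, ProbabilityMeasure.coe_mk, Measure.add_apply,
    ENNReal.toReal_add (measure_ne_top _ _) (measure_ne_top _ _)]
  simp

theorem mixture_mixture_symm {t : unitInterval} {μ ν σ τ : ProbabilityMeasure Ω}
    (h : (σ : Measure Ω) + (τ : Measure Ω) = (μ : Measure Ω) + (ν : Measure Ω)) :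
    mixture t (mixture t μ σ) (mixture (unitInterval.symm t) μ τ)
      = mixture (t * unitInterval.symm t) μ ν := by
  refine ProbabilityMeasure.eq_of_forall_toMeasure_apply_eq _ _ fun B _ =>
    (ENNReal.toReal_eq_toReal_iff' (measure_ne_top _ _) (measure_ne_top _ _)).1 ?_
  have hB := congr_arg ENNReal.toReal (congr_arg (fun m : Measure Ω => m B) h)
  simp only [Measure.add_apply, ENNReal.toReal_add (measure_ne_top _ _) (measure_ne_top _ _)]
    at hB
  simp only [toReal_mixture_apply, unitInterval.coe_symm_eq, Icc.coe_mul]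
  linear_combination (t : ℝ) * (1 - t) * hB

theorem measurable_coe_apply {B : Set Ω} (hB : MeasurableSet B) :
    Measurable fun μ : ProbabilityMeasure Ω => (μ : Measure Ω) B :=
  (Measure.measurable_coe hB).comp (comap_measurable _)

theorem measurable_mixture (t : unitInterval) {X : Type*} [MeasurableSpace X]
    {f g : X → ProbabilityMeasure Ω} (hf : Measurable f) (hg : Measurable g) :
    Measurable fun x => mixture t (f x) (g x) := by
  refine measurable_comap_iff.2 (Measure.measurable_of_measurable_coe _ fun B hB => ?_)
  exact (((measurable_coe_apply hB).comp hf).const_smul (unitInterval.toNNReal _)).add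
    (((measurable_coe_apply hB).comp hg).const_smul (unitInterval.toNNReal _))

theorem tendsto_mixture [TopologicalSpace Ω] [OpensMeasurableSpace Ω]
    (μ ν : ProbabilityMeasure Ω) : Tendsto (fun t => mixture t μ ν) (𝓝 0) (𝓝 μ) := by
  refine ProbabilityMeasure.tendsto_iff_forall_integral_tendsto.2 fun f => ?_
  simp only [integral_mixture _ (f.integrable _) (f.integrable _)]
  refine ((by fun_prop : Continuous fun t : unitInterval =>
    (1 - (t : ℝ)) * ∫ ω, f ω ∂(μ : Measure Ω) + t * ∫ ω, f ω ∂(ν : Measure Ω)).tendsto' _ _ ?_)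
  simp

end Mixture

section Policies

variable {Ω : Type*} [MeasurableSpace Ω]

theorem integrable_toReal_apply {X : Type*} [MeasurableSpace X] (m : Measure X)
    [IsFiniteMeasure m] {f : X → ProbabilityMeasure Ω} (hf : Measurable f) {B : Set Ω}
    (hB : MeasurableSet B) : Integrable (fun x => ((f x : Measure Ω) B).toReal) m :=
  .of_bound ((measurable_coe_apply hB).comp hf).ennreal_toReal.aestronglyMeasurable 1
    (.of_forall fun x => by
      rw [Real.norm_of_nonneg ENNReal.toReal_nonneg]
      exact measureReal_le_one)

theorem abs_integral_le_of_abs_le {X : Type*} [MeasurableSpace X] {m : Measure X}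
    [IsProbabilityMeasure m] {f : X → ℝ} {C : ℝ} (hC : ∀ x, |f x| ≤ C) : |∫ x, f x ∂m| ≤ C := by
  simpa only [Real.norm_eq_abs, probReal_univ, mul_one] using
    norm_integral_le_of_norm_le_const (μ := m) (f := f) (C := C) (.of_forall hC)

theorem integral_le_sSup_infoPolicies {μ : ProbabilityMeasure Ω}
    {p : ProbabilityMeasure (ProbabilityMeasure Ω)} (hp : p ∈ infoPolicies μ)
    {f : ProbabilityMeasure Ω → ℝ} {C : ℝ} (hC : ∀ ν, |f ν| ≤ C) :
    ∫ ν, f ν ∂(p : Measure (ProbabilityMeasure Ω))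
      ≤ sSup ((fun q : ProbabilityMeasure (ProbabilityMeasure Ω) =>
        ∫ ν, f ν ∂(q : Measure (ProbabilityMeasure Ω))) '' infoPolicies μ) :=
  le_csSup ⟨C, forall_mem_image.2 fun _ _ => (abs_le.1 (abs_integral_le_of_abs_le hC)).2⟩
    (mem_image_of_mem _ hp)

theorem diracPM_mem_infoPolicies (μ : ProbabilityMeasure Ω) : diracPM μ ∈ infoPolicies μ :=
  fun _ hB => integral_dirac' _ _ (measurable_coe_apply hB).ennreal_toReal.stronglyMeasurable

theorem ae_apply_eq_zero_of_mem_infoPolicies {μ : ProbabilityMeasure Ω}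
    {p : ProbabilityMeasure (ProbabilityMeasure Ω)} (hp : p ∈ infoPolicies μ) {B : Set Ω}
    (hB : MeasurableSet B) (hμB : (μ : Measure Ω) B = 0) :
    ∀ᵐ ν : ProbabilityMeasure Ω ∂(p : Measure (ProbabilityMeasure Ω)), (ν : Measure Ω) B = 0 := by
  have hzero : ∀ᵐ ν : ProbabilityMeasure Ω ∂(p : Measure (ProbabilityMeasure Ω)),
      ((ν : Measure Ω) B).toReal = 0 :=
    (integral_eq_zero_iff_of_nonneg (fun _ => ENNReal.toReal_nonneg)
      (integrable_toReal_apply _ measurable_id' hB)).1 ((hp B hB).trans (by rw [hμB]; rfl))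
  filter_upwards [hzero] with ν hν
  exact (ENNReal.toReal_eq_zero_iff _).1 hν |>.resolve_right (measure_ne_top _ _)

theorem mixture_map_mem_infoPolicies {μ : ProbabilityMeasure Ω}
    {p : ProbabilityMeasure (ProbabilityMeasure Ω)} (hp : p ∈ infoPolicies μ) {t s : unitInterval}
    {f g : ProbabilityMeasure Ω → ProbabilityMeasure Ω} (hf : Measurable f) (hg : Measurable g)
    (hfg : ∀ ν, mixture t (f ν) (g ν) = mixture s ν μ) :
    mixture t (p.map hf.aemeasurable) (p.map hg.aemeasurable) ∈ infoPolicies μ := by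
  intro B hB
  have hint {k : ProbabilityMeasure Ω → ProbabilityMeasure Ω} (hk : Measurable k) :=
    integrable_toReal_apply (p : Measure (ProbabilityMeasure Ω)) hk hB
  have hmap {k : ProbabilityMeasure Ω → ProbabilityMeasure Ω} (hk : Measurable k) :
      ∫ ν, ((ν : Measure Ω) B).toReal ∂(p.map hk.aemeasurable : Measure (ProbabilityMeasure Ω))
        = ∫ ν, ((k ν : Measure Ω) B).toReal ∂(p : Measure (ProbabilityMeasure Ω)) :=
    integral_map hk.aemeasurable
      (measurable_coe_apply hB).ennreal_toReal.aestronglyMeasurable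
  calc ∫ ν, ((ν : Measure Ω) B).toReal
        ∂(mixture t (p.map hf.aemeasurable) (p.map hg.aemeasurable) :
          Measure (ProbabilityMeasure Ω))
      = ∫ ν, ((mixture t (f ν) (g ν) : Measure Ω) B).toReal
        ∂(p : Measure (ProbabilityMeasure Ω)) := by
        rw [integral_mixture t (integrable_toReal_apply _ measurable_id' hB)
          (integrable_toReal_apply _ measurable_id' hB)]
        simp only [hmap hf, hmap hg, toReal_mixture_apply]
        rw [integral_add ((hint hf).const_mul _) ((hint hg).const_mul _), integral_const_mul,
          integral_const_mul]
    _ = (1 - s) * ((μ : Measure Ω) B).toReal + s * ((μ : Measure Ω) B).toReal := by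
        simp only [hfg, toReal_mixture_apply]
        rw [integral_add ((hint measurable_id').const_mul _) (integrable_const _),
          integral_const_mul, hp B hB, integral_const, probReal_univ, one_smul]
    _ = ((μ : Measure Ω) B).toReal := by ring

end Policies

instance opensMeasurableSpace_probabilityMeasure {Θ : Type*}
    [TopologicalSpace Θ] [MeasurableSpace Θ] [OpensMeasurableSpace Θ]
    [SecondCountableTopology (ProbabilityMeasure Θ)] :
    OpensMeasurableSpace (ProbabilityMeasure Θ) where
  borel_le := by
    let evals : Set (Set (ProbabilityMeasure Θ)) :=
      {s | ∃ (f : BoundedContinuousFunction Θ NNReal) (U : Set ENNReal), IsOpen U ∧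
        (fun μ : ProbabilityMeasure Θ => ∫⁻ θ, f θ ∂(μ : Measure Θ)) ⁻¹' U = s}
    have topology_eq :
        (inferInstance : TopologicalSpace (ProbabilityMeasure Θ)) =
          TopologicalSpace.generateFrom evals := by
      refine le_antisymm ?_ ?_
      · rw [TopologicalSpace.le_generateFrom_iff_subset_isOpen]
        rintro _ ⟨f, U, hU, rfl⟩
        exact hU.preimage
          (ProbabilityMeasure.continuous_lintegral_boundedContinuousFunction f)
      · rw [← continuous_id_iff_le]
        refine (@ProbabilityMeasure.continuous_iff_forall_continuous_lintegral _ _ _ _ _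
          (TopologicalSpace.generateFrom evals) _).2 fun f => ?_
        exact continuous_def.2 fun U hU =>
          TopologicalSpace.isOpen_generateFrom_of_mem ⟨f, U, hU, rfl⟩
    rw [borel_eq_generateFrom_of_subbasis topology_eq]
    refine MeasurableSpace.generateFrom_le ?_
    rintro _ ⟨f, U, hU, rfl⟩
    exact ((Measure.measurable_lintegral f.continuous.measurable.coe_nnreal_ennreal).comp
      (comap_measurable _)) hU.measurableSet

theorem wFun_eq_neg_vFun {A Θ : Type*} [MeasurableSpace Θ] {uS uR : A → Θ → ℝ} :
    wFun uS uR = -vFun (-uS) uR := by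
  ext μ
  have himage : senderEU (-uS) μ '' bestResponses uR μ
      = -(senderEU uS μ '' bestResponses uR μ) := by
    rw [← image_neg_eq_neg, image_image]
    exact image_congr fun a _ => integral_neg _
  rw [Pi.neg_apply, vFun, himage, Real.sSup_neg, neg_neg, wFun]

section Values

variable {A Θ : Type*} [TopologicalSpace A] [TopologicalSpace Θ] [CompactSpace Θ]
  [MeasurableSpace Θ] [OpensMeasurableSpace Θ] {uS uR : A → Θ → ℝ}

theorem continuous_senderEU {u : A → Θ → ℝ}
    (hu : Continuous (Function.uncurry u)) :
    Continuous fun q : A × ProbabilityMeasure Θ => senderEU u q.2 q.1 := by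
  have hint (f : C(Θ, ℝ)) (μ : ProbabilityMeasure Θ) : Integrable f (μ : Measure Θ) :=
    (BoundedContinuousFunction.mkOfCompact f).integrable _
  have hpairing : Continuous fun q : C(Θ, ℝ) × ProbabilityMeasure Θ =>
      ∫ θ, q.1 θ ∂(q.2 : Measure Θ) := by
    refine continuous_prod_of_continuous_lipschitzWith _ 1
      (fun f => ProbabilityMeasure.continuous_integral_continuousMap f)
      fun μ => LipschitzWith.of_dist_le_mul fun f g => ?_
    calc dist (∫ θ, f θ ∂(μ : Measure Θ)) (∫ θ, g θ ∂(μ : Measure Θ))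
        = ‖∫ θ, (f θ - g θ) ∂(μ : Measure Θ)‖ := by
          rw [integral_sub (hint f μ) (hint g μ), dist_eq_norm]
      _ ≤ dist f g * (μ : Measure Θ).real univ :=
          norm_integral_le_of_norm_le_const (.of_forall fun θ => by
            simpa only [dist_eq_norm] using ContinuousMap.dist_apply_le_dist (f := f) (g := g) θ)
      _ = (1 : NNReal) * dist f g := by simp
  exact hpairing.comp (((ContinuousMap.curry ⟨_, hu⟩).continuous.comp continuous_fst).prodMk
    continuous_snd)

theorem continuous_senderEU_action {u : A → Θ → ℝ} (hu : Continuous (Function.uncurry u))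
    (μ : ProbabilityMeasure Θ) : Continuous (senderEU u μ) :=
  (continuous_senderEU hu).comp (.prodMk_left μ)

theorem isClosed_graph_bestResponses (hR : Continuous (Function.uncurry uR)) :
    IsClosed {q : A × ProbabilityMeasure Θ | q.1 ∈ bestResponses uR q.2} := by
  change IsClosed {q : A × ProbabilityMeasure Θ |
    ∀ a, senderEU uR q.2 a ≤ senderEU uR q.2 q.1}
  rw [ofPred_forall]
  exact isClosed_iInter fun a => isClosed_le
    ((continuous_senderEU hR).comp (by fun_prop : Continuous
      fun q : A × ProbabilityMeasure Θ => (a, q.2)))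
    (continuous_senderEU hR)

variable [CompactSpace A]

theorem isCompact_bestResponses (hR : Continuous (Function.uncurry uR))
    (μ : ProbabilityMeasure Θ) : IsCompact (bestResponses uR μ) :=
  ((isClosed_graph_bestResponses hR).preimage (.prodMk_left μ)).isCompact

theorem nonempty_bestResponses [Nonempty A] (hR : Continuous (Function.uncurry uR))
    (μ : ProbabilityMeasure Θ) : (bestResponses uR μ).Nonempty :=
  let ⟨a, _, ha⟩ := isCompact_univ.exists_isMaxOn univ_nonempty
    (continuous_senderEU_action hR μ).continuousOn
  ⟨a, fun a' => ha (mem_univ a')⟩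

theorem isCompact_image_senderEU (hS : Continuous (Function.uncurry uS))
    (hR : Continuous (Function.uncurry uR)) (μ : ProbabilityMeasure Θ) :
    IsCompact (senderEU uS μ '' bestResponses uR μ) :=
  (isCompact_bestResponses hR μ).image (continuous_senderEU_action hS μ)

theorem senderEU_le_vFun (hS : Continuous (Function.uncurry uS))
    (hR : Continuous (Function.uncurry uR)) {μ : ProbabilityMeasure Θ} {a : A}
    (ha : a ∈ bestResponses uR μ) : senderEU uS μ a ≤ vFun uS uR μ :=
  le_csSup (isCompact_image_senderEU hS hR μ).bddAbove (mem_image_of_mem _ ha)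

variable [Nonempty A]

theorem exists_senderEU_eq_vFun (hS : Continuous (Function.uncurry uS))
    (hR : Continuous (Function.uncurry uR)) (μ : ProbabilityMeasure Θ) :
    ∃ a ∈ bestResponses uR μ, senderEU uS μ a = vFun uS uR μ :=
  (isCompact_image_senderEU hS hR μ).sSup_mem ((nonempty_bestResponses hR μ).image _)

theorem exists_senderEU_eq_wFun (hS : Continuous (Function.uncurry uS))
    (hR : Continuous (Function.uncurry uR)) (μ : ProbabilityMeasure Θ) :
    ∃ a ∈ bestResponses uR μ, senderEU uS μ a = wFun uS uR μ :=
  (isCompact_image_senderEU hS hR μ).sInf_mem ((nonempty_bestResponses hR μ).image _)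

theorem wFun_le_vFun (hS : Continuous (Function.uncurry uS))
    (hR : Continuous (Function.uncurry uR)) (μ : ProbabilityMeasure Θ) :
    wFun uS uR μ ≤ vFun uS uR μ := by
  obtain ⟨a, ha, haw⟩ := exists_senderEU_eq_wFun hS hR μ
  exact haw ▸ senderEU_le_vFun hS hR ha

theorem upperSemicontinuous_vFun (hS : Continuous (Function.uncurry uS))
    (hR : Continuous (Function.uncurry uR)) : UpperSemicontinuous (vFun uS uR) := by
  refine upperSemicontinuous_iff_isClosed_preimage.2 fun c => ?_
  have hproj : vFun uS uR ⁻¹' Ici c = Prod.snd ''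
      ({q : A × ProbabilityMeasure Θ | q.1 ∈ bestResponses uR q.2} ∩
        {q | c ≤ senderEU uS q.2 q.1}) := by
    ext μ
    constructor
    · intro hμ
      obtain ⟨a, ha, hav⟩ := exists_senderEU_eq_vFun hS hR μ
      exact ⟨(a, μ), ⟨ha, hμ.trans_eq hav.symm⟩, rfl⟩
    · rintro ⟨⟨a, ν⟩, ⟨ha, hc⟩, rfl⟩
      exact hc.trans (senderEU_le_vFun hS hR ha)
  rw [hproj]
  exact isClosedMap_snd_of_compactSpace _ ((isClosed_graph_bestResponses hR).inter
    (isClosed_le continuous_const (continuous_senderEU hS)))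

theorem exists_abs_values_le (hS : Continuous (Function.uncurry uS))
    (hR : Continuous (Function.uncurry uR)) :
    ∃ C, ∀ μ : ProbabilityMeasure Θ, |vFun uS uR μ| ≤ C ∧ |wFun uS uR μ| ≤ C := by
  obtain ⟨C, hC⟩ := isCompact_univ.exists_bound_of_continuousOn hS.continuousOn
  have hEU (μ : ProbabilityMeasure Θ) (a : A) : |senderEU uS μ a| ≤ C :=
    abs_integral_le_of_abs_le fun θ => hC (a, θ) (mem_univ _)
  refine ⟨C, fun μ => ?_⟩
  obtain ⟨a, -, hav⟩ := exists_senderEU_eq_vFun hS hR μ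
  obtain ⟨b, -, hbw⟩ := exists_senderEU_eq_wFun hS hR μ
  exact ⟨hav ▸ hEU μ a, hbw ▸ hEU μ b⟩

theorem tendsto_wFun_of_bestResponses_subset {ι : Type*} {l : Filter ι}
    {ν : ι → ProbabilityMeasure Θ} {μ : ProbabilityMeasure Θ} {S : Set A} {a : A}
    (hS : Continuous (Function.uncurry uS)) (hR : Continuous (Function.uncurry uR))
    (hν : Tendsto ν l (𝓝 μ)) (hclosed : IsClosed S)
    (hsub : ∀ᶠ i in l, bestResponses uR (ν i) ⊆ S) (hunique : S ∩ bestResponses uR μ ⊆ {a}) :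
    Tendsto (fun i => wFun uS uR (ν i)) l (𝓝 (senderEU uS μ a)) := by
  choose b hbmem hbw using fun i => exists_senderEU_eq_wFun hS hR (ν i)
  simp only [← hbw]
  refine tendsto_iff_ultrafilter _ _ _ |>.2 fun U hU => ?_
  obtain ⟨c, -, hbc⟩ := isCompact_univ.ultrafilter_le_nhds (U.map b) (by simp)
  have hpair : Tendsto (fun i => (b i, ν i)) U (𝓝 (c, μ)) :=
    Tendsto.prodMk_nhds hbc (hν.mono_left hU)
  have hcS : c ∈ S := hclosed.mem_of_tendsto hbc <|
    (hsub.filter_mono hU).mono fun i hi => hi (hbmem i)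
  have hcbest : c ∈ bestResponses uR μ :=
    (isClosed_graph_bestResponses hR).mem_of_tendsto hpair (.of_forall hbmem)
  obtain rfl : c = a := hunique ⟨hcS, hcbest⟩
  exact ((continuous_senderEU hS).tendsto (c, μ)).comp hpair

variable [OpensMeasurableSpace (ProbabilityMeasure Θ)]

theorem measurable_vFun (hS : Continuous (Function.uncurry uS))
    (hR : Continuous (Function.uncurry uR)) : Measurable (vFun uS uR) :=
  (upperSemicontinuous_vFun hS hR).measurable

theorem measurable_wFun (hS : Continuous (Function.uncurry uS))
    (hR : Continuous (Function.uncurry uR)) : Measurable (wFun uS uR) := by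
  rw [wFun_eq_neg_vFun]
  exact (measurable_vFun (uS := -uS) hS.neg hR).neg

theorem integrable_vFun (hS : Continuous (Function.uncurry uS))
    (hR : Continuous (Function.uncurry uR)) (p : Measure (ProbabilityMeasure Θ))
    [IsFiniteMeasure p] : Integrable (vFun uS uR) p :=
  let ⟨C, hC⟩ := exists_abs_values_le hS hR
  .of_bound (measurable_vFun hS hR).aestronglyMeasurable C (.of_forall fun μ => (hC μ).1)

theorem integrable_wFun (hS : Continuous (Function.uncurry uS))
    (hR : Continuous (Function.uncurry uR)) (p : Measure (ProbabilityMeasure Θ))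
    [IsFiniteMeasure p] : Integrable (wFun uS uR) p :=
  let ⟨C, hC⟩ := exists_abs_values_le hS hR
  .of_bound (measurable_wFun hS hR).aestronglyMeasurable C (.of_forall fun μ => (hC μ).2)

end Values

section OrderedStates

variable {Θ : Type*} [LinearOrder Θ] [MeasurableSpace Θ]

section Max

variable [MeasurableSup₂ Θ]

/-- The law of `max θ θ'` for independent `θ` and `θ'` with laws `x` and `μ`. -/
noncomputable def supLaw (x μ : ProbabilityMeasure Θ) : ProbabilityMeasure Θ :=
  (x.prod μ).map (f := fun q => q.1 ⊔ q.2) measurable_sup.aemeasurable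

/-- The upward perturbation of the belief `x` that, with probability `t`, replaces the state
by its maximum with an independent state of law `μ`. -/
noncomputable def raiseToward (t : unitInterval) (μ x : ProbabilityMeasure Θ) :
    ProbabilityMeasure Θ :=
  mixture t x (supLaw x μ)

theorem measurable_raiseToward (t : unitInterval) (μ : ProbabilityMeasure Θ) :
    Measurable (raiseToward t μ) :=
  measurable_mixture t measurable_id' <| measurable_comap_iff.2 <|
    (Measure.measurable_map _ measurable_sup).comp <|
      ProbabilityMeasure.measurable_fun_prod.comp (measurable_id'.prodMk measurable_const)

variable [TopologicalSpace Θ] [OrderClosedTopology Θ] [SecondCountableTopology Θ]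
  [OpensMeasurableSpace Θ]

theorem integral_lt_integral_supLaw {d : Θ → ℝ} (hmono : StrictMono d)
    {x μ : ProbabilityMeasure Θ} (hx : Integrable d (x : Measure Θ))
    (hsup : Integrable d (supLaw x μ : Measure Θ))
    (hexceed : ¬ ∀ᵐ θ ∂(x : Measure Θ), (μ : Measure Θ) (Ioi θ) = 0) :
    ∫ θ, d θ ∂(x : Measure Θ) < ∫ θ, d θ ∂(supLaw x μ : Measure Θ) := by
  let π : Measure (Θ × Θ) := (x : Measure Θ).prod μ
  have hfst : Integrable (fun q : Θ × Θ => d q.1) π := hx.comp_fst _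
  have hmax : Integrable (fun q : Θ × Θ => d (q.1 ⊔ q.2)) π :=
    (integrable_map_measure hsup.aestronglyMeasurable measurable_sup.aemeasurable).1 hsup
  have hgain : 0 < ∫ q, (d (q.1 ⊔ q.2) - d q.1) ∂π := by
    have hsupport : Function.support (fun q : Θ × Θ => d (q.1 ⊔ q.2) - d q.1)
        = {q | q.1 < q.2} := by
      ext q
      simp [sub_eq_zero, hmono.injective.eq_iff]
    refine (integral_pos_iff_support_of_nonneg
      (fun q => sub_nonneg.2 (hmono.monotone le_sup_left)) (hmax.sub hfst)).2 ?_
    rw [hsupport, pos_iff_ne_zero, Ne, Measure.measure_prod_null measurableSet_lt']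
    exact hexceed
  rw [integral_sub hmax hfst, integral_fun_fst, probReal_univ, one_smul, sub_pos] at hgain
  exact hgain.trans_eq
    (integral_map measurable_sup.aemeasurable hsup.aestronglyMeasurable).symm

end Max

section Min

variable [MeasurableInf₂ Θ]

/-- The law of `min θ θ'` for independent `θ` and `θ'` with laws `x` and `μ`. -/
noncomputable def infLaw (x μ : ProbabilityMeasure Θ) : ProbabilityMeasure Θ :=
  (x.prod μ).map (f := fun q => q.1 ⊓ q.2) measurable_inf.aemeasurable

/-- The downward counterpart of `raiseToward`, with minima in place of maxima. -/
noncomputable def lowerToward (t : unitInterval) (μ x : ProbabilityMeasure Θ) :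
    ProbabilityMeasure Θ :=
  mixture t x (infLaw x μ)

theorem measurable_lowerToward (t : unitInterval) (μ : ProbabilityMeasure Θ) :
    Measurable (lowerToward t μ) :=
  measurable_raiseToward (Θ := Θᵒᵈ) t μ

end Min

variable [MeasurableSup₂ Θ] [MeasurableInf₂ Θ]

theorem supLaw_add_infLaw (x μ : ProbabilityMeasure Θ) :
    (supLaw x μ : Measure Θ) + (infLaw x μ : Measure Θ) = (x : Measure Θ) + (μ : Measure Θ) := by
  ext B hB
  let π : Measure (Θ × Θ) := (x : Measure Θ).prod μ
  have hunion : (fun q : Θ × Θ => q.1 ⊔ q.2) ⁻¹' B ∪ (fun q => q.1 ⊓ q.2) ⁻¹' B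
      = Prod.fst ⁻¹' B ∪ Prod.snd ⁻¹' B := by
    ext q
    rcases le_total q.1 q.2 with h | h <;> simp [h, or_comm]
  have hinter : (fun q : Θ × Θ => q.1 ⊔ q.2) ⁻¹' B ∩ (fun q => q.1 ⊓ q.2) ⁻¹' B
      = Prod.fst ⁻¹' B ∩ Prod.snd ⁻¹' B := by
    ext q
    rcases le_total q.1 q.2 with h | h <;> simp [h, and_comm]
  calc (supLaw x μ : Measure Θ) B + (infLaw x μ : Measure Θ) B
      = π ((fun q => q.1 ⊔ q.2) ⁻¹' B) + π ((fun q => q.1 ⊓ q.2) ⁻¹' B) :=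
        congr_arg₂ _ (Measure.map_apply measurable_sup hB)
          (Measure.map_apply measurable_inf hB)
    _ = π (Prod.fst ⁻¹' B) + π (Prod.snd ⁻¹' B) := by
        rw [← measure_union_add_inter _ (measurable_inf hB), hunion, hinter,
          measure_union_add_inter _ (measurable_snd hB)]
    _ = (x : Measure Θ) B + (μ : Measure Θ) B := by
        rw [← Measure.map_apply measurable_fst hB, ← Measure.map_apply measurable_snd hB]
        simp [π]

theorem mixture_raiseToward_lowerToward (t : unitInterval) (μ x : ProbabilityMeasure Θ) :
    mixture t (raiseToward t μ x) (lowerToward (unitInterval.symm t) μ x)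
      = mixture (t * unitInterval.symm t) x μ :=
  mixture_mixture_symm (supLaw_add_infLaw x μ)

theorem mixture_lowerToward_raiseToward (t : unitInterval) (μ x : ProbabilityMeasure Θ) :
    mixture t (lowerToward t μ x) (raiseToward (unitInterval.symm t) μ x)
      = mixture (t * unitInterval.symm t) x μ :=
  mixture_mixture_symm (add_comm (infLaw x μ : Measure Θ) (supLaw x μ) ▸ supLaw_add_infLaw x μ)

end OrderedStates

section Support

variable {Θ : Type*} [TopologicalSpace Θ] [MeasurableSpace Θ] (μ : ProbabilityMeasure Θ)

theorem msupport_eq_support : msupport μ = (μ : Measure Θ).support := by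
  rw [Measure.support_eq_forall_isOpen]
  ext θ
  simp only [msupport, mem_ofPred_eq, pos_iff_ne_zero]
  exact forall_congr' fun U => ⟨fun h hθ hU => h hU hθ, fun h hU hθ => h hθ hU⟩

theorem isCompact_msupport [CompactSpace Θ] : IsCompact (msupport μ) :=
  (msupport_eq_support μ ▸ Measure.isClosed_support).isCompact

theorem measure_compl_msupport [HereditarilyLindelofSpace Θ] :
    (μ : Measure Θ) (msupport μ)ᶜ = 0 :=
  msupport_eq_support μ ▸ Measure.measure_compl_support

theorem nonempty_msupport [HereditarilyLindelofSpace Θ] : (msupport μ).Nonempty :=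
  msupport_eq_support μ ▸ Measure.nonempty_support (NeZero.ne _)

end Support

theorem eq_diracPM_of_ae_eq {Θ : Type*} [MeasurableSpace Θ] {x : ProbabilityMeasure Θ} {θ : Θ}
    (h : ∀ᵐ τ ∂(x : Measure Θ), τ = θ) : x = diracPM θ := by
  refine Subtype.ext ?_
  calc (x : Measure Θ) = (x : Measure Θ).map (fun τ => τ) := Measure.map_id'.symm
    _ = (x : Measure Θ).map (fun _ => θ) := Measure.map_congr h
    _ = Measure.dirac θ := by rw [Measure.map_const, measure_univ, one_smul]

theorem eq_diracPM_of_ae_measure_Ioi_eq_zero {Θ : Type*} [LinearOrder Θ] [TopologicalSpace Θ]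
    [ClosedIicTopology Θ] [MeasurableSpace Θ] {x μ : ProbabilityMeasure Θ} {θ : Θ}
    (hθ : IsGreatest (msupport μ) θ) (hx : (x : Measure Θ) (msupport μ)ᶜ = 0)
    (hle : ∀ᵐ τ ∂(x : Measure Θ), (μ : Measure Θ) (Ioi τ) = 0) : x = diracPM θ := by
  refine eq_diracPM_of_ae_eq ?_
  filter_upwards [hle, measure_eq_zero_iff_ae_notMem.1 hx] with τ hτ hmem
  exact (hθ.2 (not_notMem.1 hmem)).antisymm
    (not_lt.1 fun hlt => hθ.1 _ isOpen_Ioi hlt hτ)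

section OneSided

variable {A Θ : Type*} [LinearOrder A] [TopologicalSpace A]
  [LinearOrder Θ] [TopologicalSpace Θ] [CompactSpace Θ] [OrderClosedTopology Θ]
  [SecondCountableTopology Θ] [MeasurableSpace Θ] [BorelSpace Θ] {uS uR : A → Θ → ℝ}

theorem le_of_mem_bestResponses_raiseToward (hR : Continuous (Function.uncurry uR))
    (hdiff : ∀ a a', a < a' → StrictMono fun θ => uR a' θ - uR a θ)
    {x μ : ProbabilityMeasure Θ}
    (hexceed : ¬ ∀ᵐ θ ∂(x : Measure Θ), (μ : Measure Θ) (Ioi θ) = 0) {t : unitInterval}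
    (ht : 0 < t) {a b : A} (ha : a ∈ bestResponses uR x)
    (hb : b ∈ bestResponses uR (raiseToward t μ x)) : a ≤ b := by
  by_contra! hba
  have hcont (c : A) : Continuous (uR c) := hR.comp (.prodMk_right c)
  have hint (c : A) (m : ProbabilityMeasure Θ) : Integrable (uR c) (m : Measure Θ) :=
    (BoundedContinuousFunction.mkOfCompact ⟨uR c, hcont c⟩).integrable _
  have hgain (m : ProbabilityMeasure Θ) : ∫ θ, (uR a θ - uR b θ) ∂(m : Measure Θ)
      = senderEU uR m a - senderEU uR m b := integral_sub (hint a m) (hint b m)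
  have hlt := integral_lt_integral_supLaw (hdiff b a hba) ((hint a x).sub (hint b x))
    ((hint a _).sub (hint b _)) hexceed
  have hmix := integral_mixture t ((hint a x).sub (hint b x))
    ((hint a (supLaw x μ)).sub (hint b (supLaw x μ)))
  simp only [Pi.sub_apply, hgain] at hlt hmix
  have hax : senderEU uR x b ≤ senderEU uR x a := ha b
  have hbt : senderEU uR (raiseToward t μ x) a ≤ senderEU uR (raiseToward t μ x) b := hb a
  have ht' : (0 : ℝ) < t := ht
  rw [raiseToward] at hbt
  nlinarith [mul_pos ht' (sub_pos.2 hlt)]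

variable [CompactSpace A] [Nonempty A]

theorem ae_tendsto_wFun_raiseToward [ClosedIciTopology A]
    (hS : Continuous (Function.uncurry uS)) (hR : Continuous (Function.uncurry uR))
    (hdiff : ∀ a a', a < a' → StrictMono fun θ => uR a' θ - uR a θ)
    {μ : ProbabilityMeasure Θ} (hbdry : ∀ θ, IsGreatest (msupport μ) θ →
      (μ : Measure Θ) {θ} = 0 ∨ ∃ a, bestResponses uR (diracPM θ) = {a})
    {p : ProbabilityMeasure (ProbabilityMeasure Θ)} (hp : p ∈ infoPolicies μ) :
    ∀ᵐ x ∂(p : Measure (ProbabilityMeasure Θ)), ∀ a, IsGreatest (bestResponses uR x) a →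
      Tendsto (fun t => wFun uS uR (raiseToward t μ x)) (𝓝[>] 0) (𝓝 (senderEU uS x a)) := by
  obtain ⟨θ, hθ⟩ := (isCompact_msupport μ).exists_isGreatest (nonempty_msupport μ)
  have hatom : ∀ᵐ x : ProbabilityMeasure Θ ∂(p : Measure (ProbabilityMeasure Θ)),
      (μ : Measure Θ) {θ} = 0 → (x : Measure Θ) {θ} = 0 :=
    eventually_imp_distrib_left.2
      (ae_apply_eq_zero_of_mem_infoPolicies hp (measurableSet_singleton θ))
  filter_upwards [hatom, ae_apply_eq_zero_of_mem_infoPolicies hp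
    (isCompact_msupport μ).isClosed.measurableSet.compl (measure_compl_msupport μ)]
    with x hxatom hxsupport a ha
  have hlim : Tendsto (fun t => raiseToward t μ x) (𝓝[>] 0) (𝓝 x) :=
    (tendsto_mixture x _).mono_left nhdsWithin_le_nhds
  by_cases hexceed : ∀ᵐ τ ∂(x : Measure Θ), (μ : Measure Θ) (Ioi τ) = 0
  · obtain rfl := eq_diracPM_of_ae_measure_Ioi_eq_zero hθ hxsupport hexceed
    rcases hbdry θ hθ with hnull | ⟨b, hb⟩
    · simpa [diracPM] using hxatom hnull
    · obtain rfl : a = b := by simpa [hb] using ha.1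
      exact tendsto_wFun_of_bestResponses_subset hS hR hlim isClosed_univ
        (.of_forall fun _ => subset_univ _) (by simp [hb])
  · refine tendsto_wFun_of_bestResponses_subset hS hR hlim isClosed_Ici ?_
      fun b hb => (ha.2 hb.2).antisymm hb.1
    filter_upwards [self_mem_nhdsWithin] with t ht b hb
    exact le_of_mem_bestResponses_raiseToward hR hdiff hexceed ht ha.1 hb

theorem ae_tendsto_wFun_lowerToward [ClosedIicTopology A]
    (hS : Continuous (Function.uncurry uS)) (hR : Continuous (Function.uncurry uR))
    (hdiff : ∀ a a', a < a' → StrictMono fun θ => uR a' θ - uR a θ)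
    {μ : ProbabilityMeasure Θ} (hbdry : ∀ θ, IsLeast (msupport μ) θ →
      (μ : Measure Θ) {θ} = 0 ∨ ∃ a, bestResponses uR (diracPM θ) = {a})
    {p : ProbabilityMeasure (ProbabilityMeasure Θ)} (hp : p ∈ infoPolicies μ) :
    ∀ᵐ x ∂(p : Measure (ProbabilityMeasure Θ)), ∀ a, IsLeast (bestResponses uR x) a →
      Tendsto (fun t => wFun uS uR (lowerToward t μ x)) (𝓝[>] 0) (𝓝 (senderEU uS x a)) :=
  have : CompactSpace Aᵒᵈ := ‹CompactSpace A›
  have : CompactSpace Θᵒᵈ := ‹CompactSpace Θ›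
  have : SecondCountableTopology Θᵒᵈ := ‹SecondCountableTopology Θ›
  ae_tendsto_wFun_raiseToward (A := Aᵒᵈ) (Θ := Θᵒᵈ) hS hR
    (fun a a' haa' θ θ' hθ => by
      have hgain : uR a θ' - uR a' θ' < uR a θ - uR a' θ := hdiff a' a haa' hθ
      change uR a' θ - uR a θ < uR a' θ' - uR a θ'
      linarith)
    hbdry hp

end OneSided

theorem wHat_le_vHat {A Θ : Type*} [TopologicalSpace A] [CompactSpace A] [Nonempty A]
    [TopologicalSpace Θ] [CompactSpace Θ] [MeasurableSpace Θ] [OpensMeasurableSpace Θ]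
    [OpensMeasurableSpace (ProbabilityMeasure Θ)] {uS uR : A → Θ → ℝ}
    {μ : ProbabilityMeasure Θ} (hS : Continuous (Function.uncurry uS))
    (hR : Continuous (Function.uncurry uR)) :
    wHat uS uR μ ≤ vHat uS uR μ := by
  refine csSup_le (.image _ ⟨_, diracPM_mem_infoPolicies μ⟩) ?_
  rintro _ ⟨p, hp, rfl⟩
  obtain ⟨C, hC⟩ := exists_abs_values_le hS hR
  calc ∫ x, wFun uS uR x ∂(p : Measure (ProbabilityMeasure Θ))
      ≤ ∫ x, vFun uS uR x ∂(p : Measure (ProbabilityMeasure Θ)) :=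
        integral_mono (integrable_wFun hS hR _) (integrable_vFun hS hR _) (wFun_le_vFun hS hR)
    _ ≤ vHat uS uR μ := integral_le_sSup_infoPolicies hp fun x => (hC x).1

section OrderedModel

variable {A Θ : Type*} [LinearOrder Θ] [TopologicalSpace Θ] [OrderClosedTopology Θ]
  [SecondCountableTopology Θ] [MeasurableSpace Θ] [BorelSpace Θ]
  {uS uR : A → Θ → ℝ} {μ : ProbabilityMeasure Θ} {p : ProbabilityMeasure (ProbabilityMeasure Θ)}

/-- The larger of the sender's lower values at the upward and the downward perturbation of
the belief `x`. -/
noncomputable def perturbedValue (uS uR : A → Θ → ℝ) (μ : ProbabilityMeasure Θ)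
    (t : unitInterval) (x : ProbabilityMeasure Θ) : ℝ :=
  max (wFun uS uR (raiseToward t μ x)) (wFun uS uR (lowerToward t μ x))

theorem exists_measurable_perturbation (hw : Measurable (wFun uS uR)) (μ : ProbabilityMeasure Θ)
    (t : unitInterval) :
    ∃ near far : ProbabilityMeasure Θ → ProbabilityMeasure Θ, Measurable near ∧ Measurable far ∧
      (∀ x, mixture t (near x) (far x) = mixture (t * unitInterval.symm t) x μ) ∧
      ∀ x, wFun uS uR (near x) = perturbedValue uS uR μ t x := by
  classical
  let s : Set (ProbabilityMeasure Θ) :=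
    {x | wFun uS uR (lowerToward t μ x) ≤ wFun uS uR (raiseToward t μ x)}
  have hs : MeasurableSet s := measurableSet_le (hw.comp (measurable_lowerToward t μ))
    (hw.comp (measurable_raiseToward t μ))
  refine ⟨s.piecewise (raiseToward t μ) (lowerToward t μ),
    s.piecewise (lowerToward (unitInterval.symm t) μ) (raiseToward (unitInterval.symm t) μ),
    (measurable_raiseToward t μ).piecewise hs (measurable_lowerToward t μ),
    (measurable_lowerToward _ μ).piecewise hs (measurable_raiseToward _ μ),
    fun x => ?_, fun x => ?_⟩
  · by_cases hx : x ∈ s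
    · simp only [piecewise_eq_of_mem _ _ _ hx, mixture_raiseToward_lowerToward]
    · simp only [piecewise_eq_of_notMem _ _ _ hx, mixture_lowerToward_raiseToward]
  · by_cases hx : x ∈ s
    · rw [piecewise_eq_of_mem _ _ _ hx]
      exact (max_eq_left hx).symm
    · rw [piecewise_eq_of_notMem _ _ _ hx]
      exact (max_eq_right (not_le.1 hx).le).symm

theorem tendsto_min_perturbedValue [Preorder A] {x : ProbabilityMeasure Θ}
    (hraise : ∀ a, IsGreatest (bestResponses uR x) a →
      Tendsto (fun t => wFun uS uR (raiseToward t μ x)) (𝓝[>] 0) (𝓝 (senderEU uS x a)))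
    (hlower : ∀ a, IsLeast (bestResponses uR x) a →
      Tendsto (fun t => wFun uS uR (lowerToward t μ x)) (𝓝[>] 0) (𝓝 (senderEU uS x a)))
    (hext : ∃ a, senderEU uS x a = vFun uS uR x ∧
      (IsLeast (bestResponses uR x) a ∨ IsGreatest (bestResponses uR x) a)) :
    Tendsto (fun t => min (vFun uS uR x) (perturbedValue uS uR μ t x)) (𝓝[>] 0)
      (𝓝 (vFun uS uR x)) := by
  have squeeze {f : unitInterval → ℝ} (hf : Tendsto f (𝓝[>] 0) (𝓝 (vFun uS uR x)))
      (hle : ∀ t, f t ≤ perturbedValue uS uR μ t x) :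
      Tendsto (fun t => min (vFun uS uR x) (perturbedValue uS uR μ t x)) (𝓝[>] 0)
        (𝓝 (vFun uS uR x)) := by
    have hmin := (tendsto_const_nhds (x := vFun uS uR x)).min hf
    rw [min_self] at hmin
    exact tendsto_of_tendsto_of_tendsto_of_le_of_le hmin tendsto_const_nhds
      (fun t => min_le_min_left _ (hle t)) fun t => min_le_left _ _
  obtain ⟨a, hav, ha | ha⟩ := hext
  · exact squeeze (hav ▸ hlower a ha) fun t => le_max_right _ _
  · exact squeeze (hav ▸ hraise a ha) fun t => le_max_left _ _

variable [TopologicalSpace A] [CompactSpace A] [Nonempty A] [CompactSpace Θ]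

theorem measurable_perturbedValue (hS : Continuous (Function.uncurry uS))
    (hR : Continuous (Function.uncurry uR)) (t : unitInterval) :
    Measurable (perturbedValue uS uR μ t) :=
  ((measurable_wFun hS hR).comp (measurable_raiseToward t μ)).max
    ((measurable_wFun hS hR).comp (measurable_lowerToward t μ))

theorem integral_perturbedValue_sub_le_wHat (hS : Continuous (Function.uncurry uS))
    (hR : Continuous (Function.uncurry uR)) {C : ℝ} (hC : ∀ x, |wFun uS uR x| ≤ C)
    (hp : p ∈ infoPolicies μ) (t : unitInterval) :
    (1 - t) * ∫ x, perturbedValue uS uR μ t x ∂(p : Measure (ProbabilityMeasure Θ)) - t * C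
      ≤ wHat uS uR μ := by
  obtain ⟨near, far, hnear, hfar, hmix, hvalue⟩ :=
    exists_measurable_perturbation (measurable_wFun hS hR) μ t
  calc (1 - t) * ∫ x, perturbedValue uS uR μ t x ∂(p : Measure (ProbabilityMeasure Θ)) - t * C
      = (1 - t) * ∫ x, wFun uS uR x
          ∂(p.map hnear.aemeasurable : Measure (ProbabilityMeasure Θ)) + t * -C := by
        rw [ProbabilityMeasure.toMeasure_map, integral_map hnear.aemeasurable
          (measurable_wFun hS hR).aestronglyMeasurable]
        simp only [hvalue]
        ring
    _ ≤ (1 - t) * ∫ x, wFun uS uR x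
          ∂(p.map hnear.aemeasurable : Measure (ProbabilityMeasure Θ))
        + t * ∫ x, wFun uS uR x
          ∂(p.map hfar.aemeasurable : Measure (ProbabilityMeasure Θ)) := by
        gcongr
        · exact t.2.1
        · exact (abs_le.1 (abs_integral_le_of_abs_le hC)).1
    _ = ∫ x, wFun uS uR x ∂(mixture t (p.map hnear.aemeasurable) (p.map hfar.aemeasurable) :
          Measure (ProbabilityMeasure Θ)) :=
        (integral_mixture t (integrable_wFun hS hR _) (integrable_wFun hS hR _)).symm
    _ ≤ wHat uS uR μ :=
        integral_le_sSup_infoPolicies (mixture_map_mem_infoPolicies hp hnear hfar hmix) hC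

theorem integral_vFun_le_wHat (hS : Continuous (Function.uncurry uS))
    (hR : Continuous (Function.uncurry uR)) (hp : p ∈ infoPolicies μ)
    (hlim : ∀ᵐ x ∂(p : Measure (ProbabilityMeasure Θ)),
      Tendsto (fun t => min (vFun uS uR x) (perturbedValue uS uR μ t x)) (𝓝[>] 0)
        (𝓝 (vFun uS uR x))) :
    ∫ x, vFun uS uR x ∂(p : Measure (ProbabilityMeasure Θ)) ≤ wHat uS uR μ := by
  obtain ⟨C, hC⟩ := exists_abs_values_le hS hR
  have hmeas (t : unitInterval) :
      Measurable fun x => min (vFun uS uR x) (perturbedValue uS uR μ t x) :=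
    (measurable_vFun hS hR).min (measurable_perturbedValue hS hR t)
  have hbound (t : unitInterval) (x : ProbabilityMeasure Θ) : |perturbedValue uS uR μ t x| ≤ C :=
    abs_max_le_max_abs_abs.trans (max_le (hC _).2 (hC _).2)
  have hminbound (t : unitInterval) (x : ProbabilityMeasure Θ) :
      |min (vFun uS uR x) (perturbedValue uS uR μ t x)| ≤ C :=
    abs_min_le_max_abs_abs.trans (max_le (hC x).1 (hbound t x))
  have hintegral : Tendsto (fun t => ∫ x, min (vFun uS uR x) (perturbedValue uS uR μ t x)
      ∂(p : Measure (ProbabilityMeasure Θ))) (𝓝[>] 0)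
      (𝓝 (∫ x, vFun uS uR x ∂(p : Measure (ProbabilityMeasure Θ)))) :=
    tendsto_integral_filter_of_dominated_convergence (fun _ => C)
      (.of_forall fun t => (hmeas t).aestronglyMeasurable)
      (.of_forall fun t => .of_forall (hminbound t)) (integrable_const C) hlim
  have hcoe : Tendsto (fun t : unitInterval => (t : ℝ)) (𝓝[>] 0) (𝓝 0) :=
    (continuous_subtype_val.tendsto' 0 0 rfl).mono_left nhdsWithin_le_nhds
  have hnonempty : (𝓝[>] (0 : unitInterval)).NeBot := nhdsGT_neBot_of_exists_gt
    ⟨(1 : unitInterval), zero_lt_one⟩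
  have hpenalized := ((hcoe.const_sub 1).mul hintegral).sub (hcoe.mul_const C)
  rw [sub_zero, one_mul, zero_mul, sub_zero] at hpenalized
  refine le_of_tendsto hpenalized (.of_forall fun t => ?_)
  refine le_trans ?_ (integral_perturbedValue_sub_le_wHat hS hR (fun x => (hC x).2) hp t)
  gcongr
  · exact sub_nonneg.2 t.2.2
  · exact .of_bound (hmeas t).aestronglyMeasurable C (.of_forall (hminbound t))
  · exact .of_bound (measurable_perturbedValue hS hR t).aestronglyMeasurable C
      (.of_forall (hbound t))
  · exact fun x => min_le_right _ _

theorem unique_payoff_ordered_extreme_general [LinearOrder A] [OrderClosedTopology A]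
    (hS : Continuous (Function.uncurry uS)) (hR : Continuous (Function.uncurry uR))
    (hdiff : ∀ a a', a < a' → StrictMono fun θ => uR a' θ - uR a θ)
    (hext : ∀ x : ProbabilityMeasure Θ, ∃ a, senderEU uS x a = vFun uS uR x ∧
      (IsLeast (bestResponses uR x) a ∨ IsGreatest (bestResponses uR x) a))
    (hbdry : ∀ θ, IsLeast (msupport μ) θ ∨ IsGreatest (msupport μ) θ →
      (μ : Measure Θ) {θ} = 0 ∨ ∃ a, bestResponses uR (diracPM θ) = {a}) :
    wHat uS uR μ = vHat uS uR μ := by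
  refine (wHat_le_vHat hS hR).antisymm (csSup_le (.image _ ⟨_, diracPM_mem_infoPolicies μ⟩) ?_)
  rintro _ ⟨p, hp, rfl⟩
  refine integral_vFun_le_wHat hS hR hp ?_
  filter_upwards [ae_tendsto_wFun_raiseToward hS hR hdiff (fun θ hθ => hbdry θ (.inr hθ)) hp,
    ae_tendsto_wFun_lowerToward hS hR hdiff (fun θ hθ => hbdry θ (.inl hθ)) hp]
    with x hraise hlower
  exact tendsto_min_perturbedValue hraise hlower (hext x)

end OrderedModel

theorem isLeast_of_coe_eq_sInf {α : Type*} [ConditionallyCompleteLattice α] {A : Set α} {s : Set A}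
    {a : A} (hs : BddBelow s) (ha : a ∈ s) (h : (a : α) = sInf ((fun b : A => (b : α)) '' s)) :
    IsLeast s a :=
  ⟨ha, fun _ hb => Subtype.coe_le_coe.1 <| h.trans_le <|
    csInf_le ((Subtype.mono_coe (· ∈ A)).map_bddBelow hs) (mem_image_of_mem _ hb)⟩

theorem isGreatest_of_coe_eq_sSup {α : Type*} [ConditionallyCompleteLattice α] {A : Set α}
    {s : Set A} {a : A} (hs : BddAbove s) (ha : a ∈ s)
    (h : (a : α) = sSup ((fun b : A => (b : α)) '' s)) : IsGreatest s a :=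
  isLeast_of_coe_eq_sInf (α := αᵒᵈ) hs ha h

/-- **Lemma behind the ordered-model theorem.** Suppose `A, Θ ⊆ ℝ`, `u_R` has strictly
increasing differences, at every belief the sender's best payoff among receiver best
responses is attained at the smallest or largest element of `A*_R(μ)`, and for each
endpoint `θ̄` of the support of the prior, either `μ0({θ̄}) = 0` or the receiver's
best response at `δ_θ̄` is unique. Then the sender has a unique equilibrium payoff. -/
theorem unique_payoff_ordered_extreme
    (A Θ : Set ℝ) [Nonempty ↥A] [Nonempty ↥Θ] [CompactSpace ↥A] [CompactSpace ↥Θ]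
    (uS uR : ↥A → ↥Θ → ℝ)
    (hS : Continuous fun p : ↥A × ↥Θ => uS p.1 p.2)
    (hR : Continuous fun p : ↥A × ↥Θ => uR p.1 p.2)
    (hsid : ∀ a a' : ↥A, (a : ℝ) < (a' : ℝ) → ∀ θ θ' : ↥Θ, (θ : ℝ) < (θ' : ℝ) →
      uR a' θ - uR a θ < uR a' θ' - uR a θ')
    (hext : ∀ μ : ProbabilityMeasure ↥Θ, ∃ a ∈ bestResponses uR μ,
      senderEU uS μ a = vFun uS uR μ ∧
      ((a : ℝ) = sInf ((fun b : ↥A => (b : ℝ)) '' bestResponses uR μ) ∨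
        (a : ℝ) = sSup ((fun b : ↥A => (b : ℝ)) '' bestResponses uR μ)))
    (μ0 : ProbabilityMeasure ↥Θ)
    (hbdry : ∀ θbar : ↥Θ,
      ((θbar : ℝ) = sInf ((fun t : ↥Θ => (t : ℝ)) '' msupport μ0) ∨
        (θbar : ℝ) = sSup ((fun t : ↥Θ => (t : ℝ)) '' msupport μ0)) →
      ((μ0 : Measure ↥Θ) {θbar} = 0 ∨ ∃ a : ↥A, bestResponses uR (diracPM θbar) = {a})) :
    wHat uS uR μ0 = vHat uS uR μ0 := by
  have hcompact (μ : ProbabilityMeasure Θ) := isCompact_bestResponses hR μ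
  refine unique_payoff_ordered_extreme_general hS hR (fun a a' haa' θ θ' => hsid a a' haa' θ θ')
    (fun μ => ?_) fun θ hθ => hbdry θ ?_
  · obtain ⟨a, ha, hav, hmin | hmax⟩ := hext μ
    · exact ⟨a, hav, .inl (isLeast_of_coe_eq_sInf (hcompact μ).bddBelow ha hmin)⟩
    · exact ⟨a, hav, .inr (isGreatest_of_coe_eq_sSup (hcompact μ).bddAbove ha hmax)⟩
  · exact hθ.imp (fun h => ((Subtype.mono_coe (· ∈ Θ)).map_isLeast h).csInf_eq.symm)
      fun h => ((Subtype.mono_coe (· ∈ Θ)).map_isGreatest h).csSup_eq.symm
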